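/- Claim 3 in the split-early gadget: under the gadget setup, for every t ∈ F and every standard name n, s_k ∪ {t ≈ n} ⊨ˢ B_{k−1} c^ord_k. -/

import Mathlib

/-! ## Limited belief: basic syntax and semantics (Schwering 2017, quantifier-free). -/

/-- Standard names (a countably infinite supply). -/
abbrev Name := ℕ

/-- Function terms `f(n₁,…,n_j)`: a function symbol applied to standard names. -/
structure FnTerm where
  sym : ℕ
  args : List Name
deriving DecidableEq, Inhabited

/-- Literals `t ≈ n` (pos) and `t ≉ n` (neg). -/
inductive Lit where
  | pos (t : FnTerm) (n : Name)
  | neg (t : FnTerm) (n : Name)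
deriving DecidableEq

instance : Inhabited Lit := ⟨.pos default 0⟩

/-- The left-hand side (function term) of a literal. -/
def Lit.lhs : Lit → FnTerm
  | .pos t _ => t
  | .neg t _ => t

/-- The right-hand side (standard name) of a literal. -/
def Lit.rhs : Lit → Name
  | .pos _ n => n
  | .neg _ n => n

/-- The negation `¬ℓ` of a literal. -/
def Lit.negate : Lit → Lit
  | .pos t n => .neg t n
  | .neg t n => .pos t n

/-- Names occurring in a literal. -/
def Lit.names (ℓ : Lit) : Finset Name := insert ℓ.rhs ℓ.lhs.args.toFinset

/-- Two literals are complementary iff they are of the form `t ≈ n` and `t ≉ n`,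
or of the form `t ≈ n` and `t ≈ n'` for distinct `n, n'`. -/
def Lit.complementary : Lit → Lit → Bool
  | .pos t n, .neg t' n' => t == t' && n == n'
  | .neg t n, .pos t' n' => t == t' && n == n'
  | .pos t n, .pos t' n' => t == t' && n != n'
  | .neg _ _, .neg _ _ => false

/-- A clause is a (finite) set of literals. -/
abbrev Clause := Finset Lit

/-- Unit propagation of clause `c` with literal `ℓ`: remove from `c` all
literals complementary to `ℓ`. -/
def Clause.prop (c : Clause) (ℓ : Lit) : Clause :=
  c.filter (fun ℓ' => Lit.complementary ℓ' ℓ = false)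

/-- `c₁` subsumes `c₂` iff for every `t ≈ n ∈ c₁`, `t ≈ n ∈ c₂` or `t ≉ n' ∈ c₂`
for some `n' ≠ n`, and for every `t ≉ n ∈ c₁`, `t ≉ n ∈ c₂`. -/
def Clause.subsumes (c₁ c₂ : Clause) : Prop :=
  (∀ t n, Lit.pos t n ∈ c₁ → Lit.pos t n ∈ c₂ ∨ ∃ n', n' ≠ n ∧ Lit.neg t n' ∈ c₂) ∧
  (∀ t n, Lit.neg t n ∈ c₁ → Lit.neg t n ∈ c₂)

/-- `UP s`: the closure of the set of clauses `s` under unit propagation and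
subsumption.  `UP s c` means `c ∈ UP(s)`. -/
inductive UP (s : Set Clause) : Clause → Prop
  | mem {c : Clause} : c ∈ s → UP s c
  | unit {c : Clause} {ℓ : Lit} : UP s {ℓ} → UP s c → UP s (c.prop ℓ)
  | sub {c₁ c₂ : Clause} : UP s c₁ → c₁.subsumes c₂ → UP s c₂

/-- Objective formulas: literals (`atom` is `t ≈ n`, `not atom` is `t ≉ n`),
negation and disjunction. -/
inductive Form where
  | atom (t : FnTerm) (n : Name)
  | not (φ : Form)
  | or (φ ψ : Form)
deriving DecidableEq

/-- `α ∧ β` abbreviates `¬(¬α ∨ ¬β)`. -/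
def Form.and (φ ψ : Form) : Form := .not (.or (.not φ) (.not ψ))

/-- `α → β` abbreviates `¬α ∨ β`. -/
def Form.imp (φ ψ : Form) : Form := .or (.not φ) ψ

/-- A formula is (syntactically) a clause iff it is a disjunction of literals. -/
def Form.isClause : Form → Bool
  | .atom _ _ => true
  | .not (.atom _ _) => true
  | .not _ => false
  | .or φ ψ => φ.isClause && ψ.isClause

/-- The set of literals of a clause-formula. -/
def Form.lits : Form → Clause
  | .atom t n => {Lit.pos t n}
  | .not (.atom t n) => {Lit.neg t n}
  | .not _ => ∅
  | .or φ ψ => φ.lits ∪ ψ.lits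

/-- The limited-belief truth relation `s ⊨ˢ α` for objective formulas:
a clause is true iff it is in `UP(s)`; a non-clause disjunction is true iff one
of its disjuncts is; `¬(α ∨ β)` is true iff `¬α` and `¬β` are; `¬¬α` is true
iff `α` is. -/
def sat (s : Set Clause) : Form → Prop
  | .atom t n => UP s {Lit.pos t n}
  | .not (.atom t n) => UP s {Lit.neg t n}
  | .not (.not φ) => sat s φ
  | .not (.or φ ψ) => sat s (.not φ) ∧ sat s (.not ψ)
  | .or φ ψ => if (Form.or φ ψ).isClause then UP s (Form.or φ ψ).lits
               else sat s φ ∨ sat s ψ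

/-- `satB s k α` is `s ⊨ˢ B_k α`: `B₀ α` holds iff `α` does, and `B_{k+1} α`
holds iff for some function term `t`, for all names `n`,
`s ∪ {t ≈ n} ⊨ˢ B_k α`. -/
def satB (s : Set Clause) : ℕ → Form → Prop
  | 0, φ => sat s φ
  | k+1, φ => ∃ t : FnTerm, ∀ n : Name, satB (s ∪ {({Lit.pos t n} : Clause)}) k φ

/-- A world maps function terms to standard names. -/
abbrev World := FnTerm → Name

/-- Classical truth of a literal in a world. -/
def Lit.holds (w : World) : Lit → Prop
  | .pos t n => w t = n
  | .neg t n => w t ≠ n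

/-- Classical truth of a clause in a world. -/
def Clause.holds (w : World) (c : Clause) : Prop := ∃ ℓ ∈ c, ℓ.holds w

/-- Classical truth of an objective formula in a world. -/
def wsat (w : World) : Form → Prop
  | .atom t n => w t = n
  | .not φ => ¬ wsat w φ
  | .or φ ψ => wsat w φ ∨ wsat w ψ

/-- Classical entailment `s ⊨ α`. -/
def entails (s : Set Clause) (φ : Form) : Prop :=
  ∀ w : World, (∀ c ∈ s, c.holds w) → wsat w φ

/-- Classical entailment of a clause (disjunction of its literals). -/
def entailsClause (s : Set Clause) (c : Clause) : Prop :=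
  ∀ w : World, (∀ c' ∈ s, c'.holds w) → c.holds w

/-- Function terms mentioned in a formula. -/
def Form.terms : Form → Finset FnTerm
  | .atom t _ => {t}
  | .not φ => φ.terms
  | .or φ ψ => φ.terms ∪ ψ.terms

/-- Standard names mentioned in a formula. -/
def Form.names : Form → Finset Name
  | .atom t n => insert n t.args.toFinset
  | .not φ => φ.names
  | .or φ ψ => φ.names ∪ ψ.names
/-- CNF formulas: clauses, or conjunctions of CNF formulas. -/
inductive IsCNF : Form → Prop
  | clause {φ : Form} : φ.isClause = true → IsCNF φ
  | and {φ ψ : Form} : IsCNF φ → IsCNF ψ → IsCNF (Form.and φ ψ)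

/-- The set of clauses of a CNF formula. -/
def Form.cnfClauses : Form → Set Clause
  | .not (.or (.not φ) (.not ψ)) => φ.cnfClauses ∪ ψ.cnfClauses
  | φ => if φ.isClause then {φ.lits} else ∅

/-- The formula corresponding to a literal. -/
def Lit.toForm : Lit → Form
  | .pos t n => .atom t n
  | .neg t n => .not (.atom t n)

/-- `⋁_{ℓ ∈ ls} ℓ ∨ base`. -/
def Form.bigOrLits (ls : List Lit) (base : Form) : Form :=
  ls.foldr (fun ℓ acc => Form.or ℓ.toForm acc) base

/-- The disjunction of a nonempty list of literals (junk on the empty list). -/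
def Form.bigOr : List Lit → Form
  | [] => Form.atom default 0
  | [ℓ] => ℓ.toForm
  | ℓ :: ℓ' :: ls => Form.or ℓ.toForm (Form.bigOr (ℓ' :: ls))

/-- The split-early gadget `s_k`: the least set including `s` that, for every
`ℓ ∈ L`, contains the clauses `¬ℓ ∨ c^ord`, `ℓ ∨ ℓʷ₁ ∨ … ∨ ℓʷ_{k-1} ∨ c^ord`,
and `ℓ ∨ ¬ℓʷ_i ∨ c^ord` for each `i`, where `c^ord = ℓᵒ₁ ∨ … ∨ ℓᵒ_k`. -/
def gadget (s : Set Clause) (L : List Lit) (lws los : List Lit) : Set Clause :=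
  s ∪ {c | ∃ ℓ ∈ L,
        c = insert ℓ.negate los.toFinset ∨
        c = insert ℓ (lws.toFinset ∪ los.toFinset) ∨
        ∃ ℓw ∈ lws, c = insert ℓ (insert ℓw.negate los.toFinset)}

/-!
Once the value of the left-hand side of a literal `ℓ` is known, unit propagation eliminates `ℓ` or
its negation. For `ℓ ∈ L` with left-hand side `t`, the unit clause `t ≈ n` therefore leaves one of
two cases. If `¬ℓ` is eliminated, the clause `¬ℓ ∨ c^ord` reduces to `c^ord` and no split is needed.
If `ℓ` is eliminated, `ℓʷ₁ ∨ … ∨ ℓʷ_{k-1} ∨ c^ord` and all the clauses `¬ℓʷ_i ∨ c^ord` remain, and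
splitting on the left-hand sides of the `ℓʷ_i` one after the other either yields `c^ord` early or
shortens the long clause by one literal per split, so that it is `c^ord` after `k - 1` splits.
-/

theorem Clause.subsumes_of_subset {c d : Clause} (h : c ⊆ d) : c.subsumes d :=
  ⟨fun _ _ hc => Or.inl (h hc), fun _ _ hc => h hc⟩

theorem Clause.prop_insert_subset {ℓ u : Lit} (h : ℓ.complementary u = true) (c : Clause) :
    Clause.prop (insert ℓ c) u ⊆ c := by
  rw [Clause.prop, Finset.filter_insert, if_neg (by simp [h])]
  exact Finset.filter_subset _ c

theorem Lit.complementary_pos_lhs_or_negate (ℓ : Lit) (n : Name) :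
    ℓ.complementary (.pos ℓ.lhs n) = true ∨ ℓ.negate.complementary (.pos ℓ.lhs n) = true := by
  cases ℓ with
  | pos _ m | neg _ m =>
    by_cases h : m = n <;> simp [Lit.complementary, Lit.lhs, Lit.negate, h]

namespace UP

variable {s s' : Set Clause} {c d : Clause}

theorem mono (hs : s ⊆ s') (h : UP s c) : UP s' c := by
  induction h with
  | mem hc => exact mem (hs hc)
  | unit _ _ ihℓ ihc => exact unit ihℓ ihc
  | sub _ hsub ih => exact sub ih hsub

theorem of_subset (h : UP s c) (hcd : c ⊆ d) : UP s d :=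
  h.sub (Clause.subsumes_of_subset hcd)

theorem union_singleton_of_insert {ℓ u : Lit} (hℓu : ℓ.complementary u = true)
    (h : UP s (insert ℓ c)) : UP (s ∪ {{u}}) c := by
  have hu : UP (s ∪ {{u}}) {u} := mem (Set.mem_union_right s rfl)
  have hinsert : UP (s ∪ {{u}}) (insert ℓ c) := h.mono Set.subset_union_left
  exact (unit hu hinsert).of_subset (Clause.prop_insert_subset hℓu c)

end UP

theorem Lit.isClause_toForm (ℓ : Lit) : ℓ.toForm.isClause = true := by
  cases ℓ <;> rfl

theorem Lit.lits_toForm (ℓ : Lit) : ℓ.toForm.lits = {ℓ} := by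
  cases ℓ <;> rfl

theorem Form.isClause_bigOr (ls : List Lit) : (Form.bigOr ls).isClause = true := by
  induction ls using Form.bigOr.induct with
  | case1 => rfl
  | case2 ℓ => exact ℓ.isClause_toForm
  | case3 ℓ ℓ' ls ih => rw [Form.bigOr, Form.isClause, ℓ.isClause_toForm, ih, Bool.and_self]

theorem Form.lits_bigOr {ls : List Lit} (h : ls ≠ []) : (Form.bigOr ls).lits = ls.toFinset := by
  induction ls using Form.bigOr.induct with
  | case1 => exact absurd rfl h
  | case2 ℓ => exact ℓ.lits_toForm
  | case3 ℓ ℓ' ls ih =>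
    rw [Form.bigOr, Form.lits, ℓ.lits_toForm, ih (List.cons_ne_nil ℓ' ls),
      List.toFinset_cons (a := ℓ), Finset.insert_eq]

section LimitedBelief

variable {s s' : Set Clause} {φ : Form}

theorem sat_iff_of_isClause (hφ : φ.isClause = true) : sat s φ ↔ UP s φ.lits := by
  cases φ with
  | atom t n => rw [sat, Form.lits]
  | not ψ =>
    cases ψ with
    | atom t n => rw [sat, Form.lits]
    | not _ | or _ _ => exact absurd hφ Bool.false_ne_true
  | or ψ χ => rw [sat, if_pos hφ]

theorem sat_mono (hs : s ⊆ s') (h : sat s φ) : sat s' φ := by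
  induction φ using sat.induct with rw [sat] at h ⊢
  | case1 | case2 => exact h.mono hs
  | case3 ψ ih => exact ih h
  | case4 ψ χ ihψ ihχ => exact h.imp ihψ ihχ
  | case5 ψ χ hclause =>
    rw [if_pos hclause] at h ⊢
    exact h.mono hs
  | case6 ψ χ hclause ihψ ihχ =>
    rw [if_neg hclause] at h ⊢
    exact h.imp ihψ ihχ

theorem satB_of_sat (h : sat s φ) (k : ℕ) : satB s k φ := by
  induction k generalizing s with
  | zero => exact h
  | succ k ih => exact ⟨default, fun n => ih (sat_mono Set.subset_union_left h)⟩

theorem satB_length_of_UP (hφ : φ.isClause = true) (ls : List Lit)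
    (hor : UP s (ls.toFinset ∪ φ.lits)) (hneg : ∀ ℓ ∈ ls, UP s (insert ℓ.negate φ.lits)) :
    satB s ls.length φ := by
  induction ls generalizing s with
  | nil => exact (sat_iff_of_isClause hφ).2 (by simpa using hor)
  | cons ℓ ls ih =>
    refine ⟨ℓ.lhs, fun n => ?_⟩
    rw [List.toFinset_cons, Finset.insert_union] at hor
    obtain ⟨hnegℓ, hnegls⟩ := List.forall_mem_cons.1 hneg
    rcases ℓ.complementary_pos_lhs_or_negate n with hcompl | hcompl
    · exact ih (hor.union_singleton_of_insert hcompl) fun ℓ' hℓ' =>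
        (hnegls ℓ' hℓ').mono Set.subset_union_left
    · have hφlits := hnegℓ.union_singleton_of_insert hcompl
      exact satB_of_sat ((sat_iff_of_isClause hφ).2 hφlits) ls.length

end LimitedBelief

section Gadget

variable {s : Set Clause} {L lws los : List Lit} {ℓ ℓw : Lit}

theorem insert_negate_mem_gadget (hℓ : ℓ ∈ L) :
    insert ℓ.negate los.toFinset ∈ gadget s L lws los :=
  Or.inr ⟨ℓ, hℓ, Or.inl rfl⟩

theorem insert_union_mem_gadget (hℓ : ℓ ∈ L) :
    insert ℓ (lws.toFinset ∪ los.toFinset) ∈ gadget s L lws los :=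
  Or.inr ⟨ℓ, hℓ, Or.inr (Or.inl rfl)⟩

theorem insert_insert_negate_mem_gadget (hℓ : ℓ ∈ L) (hℓw : ℓw ∈ lws) :
    insert ℓ (insert ℓw.negate los.toFinset) ∈ gadget s L lws los :=
  Or.inr ⟨ℓ, hℓ, Or.inr (Or.inr ⟨ℓw, hℓw, rfl⟩)⟩

end Gadget

theorem split_early_gadget_claim3_general (s : Set Clause) {L : List Lit} (lws : List Lit)
    {los : List Lit} (hlos : los ≠ []) {ℓ : Lit} (hℓ : ℓ ∈ L) (n : Name) :
    satB (gadget s L lws los ∪ {{.pos ℓ.lhs n}}) lws.length (Form.bigOr los) := by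
  have hclause := Form.isClause_bigOr los
  have hlits := Form.lits_bigOr hlos
  rcases ℓ.complementary_pos_lhs_or_negate n with hcompl | hcompl
  · refine satB_length_of_UP hclause lws ?_ fun ℓw hℓw => ?_ <;> rw [hlits]
    · exact (UP.mem (insert_union_mem_gadget hℓ)).union_singleton_of_insert hcompl
    · exact (UP.mem (insert_insert_negate_mem_gadget hℓ hℓw)).union_singleton_of_insert hcompl
  · refine satB_of_sat ((sat_iff_of_isClause hclause).2 ?_) lws.length
    rw [hlits]
    exact (UP.mem (insert_negate_mem_gadget hℓ)).union_singleton_of_insert hcompl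

/-- **Claim 3 in the split-early gadget**: for every `t ∈ F` and every name
`n`, `s_k ∪ {t ≈ n} ⊨ˢ B_{k-1} c^ord_k`. -/
theorem split_early_gadget_claim3
    (F : Finset FnTerm) (hF : F.Nonempty)
    (L : List Lit)
    (hLF : ∀ ℓ ∈ L, Lit.lhs ℓ ∈ F)
    (hFL : ∀ t ∈ F, ∃! ℓ, ℓ ∈ L ∧ Lit.lhs ℓ = t)
    (α : Form) (k : ℕ) (hk : 1 ≤ k)
    (s : Set Clause)
    (hs : ∀ t : FnTerm, t ∉ F → ∃ n : Name,
        ¬ entailsClause (s ∪ {({Lit.pos t n} : Clause)}) L.toFinset ∧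
        ¬ entailsClause (s ∪ {({Lit.pos t n} : Clause)}) (L.map Lit.negate).toFinset)
    (lws los : List Lit)
    (hlws : lws.length = k - 1) (hlos : los.length = k)
    (hauxNodup : ((lws ++ los).map Lit.lhs).Nodup)
    (hauxFresh : ∀ ℓ' ∈ lws ++ los,
        (∀ c ∈ s, ∀ ℓ'' ∈ c, Lit.lhs ℓ'' ≠ Lit.lhs ℓ') ∧ Lit.lhs ℓ' ∉ α.terms)
    :
    ∀ t ∈ F, ∀ n : Name,
      satB ((gadget s L lws los) ∪ {({Lit.pos t n} : Clause)}) (k - 1)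
        (Form.bigOr los) := by
  intro t ht n
  obtain ⟨ℓ, ⟨hℓ, rfl⟩, -⟩ := hFL t ht
  have hlos_ne : los ≠ [] := List.ne_nil_of_length_pos (hlos ▸ hk)
  exact hlws ▸ split_early_gadget_claim3_general s lws hlos_ne hℓ n
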